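/- arXiv:2104.04425 — 11 statements merged into one kernel-verified Lean document; each statement's English description precedes it below -/
import Mathlib

section
/- Let k be a field of characteristic zero, V a k-vector space, and let μ, ν : V × V → V be two associative bilinear maps. Then the bilinear map α·μ + β·ν is associative for every pair of scalars α, β ∈ k if and only if the bilinear map μ + ν is associative. -/
/-!
The associator of `α • μ + β • ν` is quadratic in `(α, β)`: its `α ^ 2` and `β ^ 2` coefficients are
the associators of `μ` and `ν`, which vanish, and its `α * β` coefficient is a mixed associator that
does not depend on the scalars. Evaluating at `α = β = 1` shows that `μ + ν` is associative exactly
when this mixed term vanishes, and then every combination is associative.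
-/

/-- A bilinear map `μ : V → V → V` is associative if `μ (μ x y) z = μ x (μ y z)`. -/
def IsAssociative {k V : Type*} [Field k] [AddCommGroup V] [Module k V]
    (μ : V →ₗ[k] V →ₗ[k] V) : Prop :=
  ∀ x y z : V, μ (μ x y) z = μ x (μ y z)

theorem linear_compatible_assoc_iff {k V : Type*} [Field k] [CharZero k]
    [AddCommGroup V] [Module k V]
    (μ ν : V →ₗ[k] V →ₗ[k] V) (hμ : IsAssociative μ) (hν : IsAssociative ν) :
    (∀ α β : k, IsAssociative (α • μ + β • ν)) ↔ IsAssociative (μ + ν) := by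
  constructor
  · intro h
    simpa using h 1 1
  · intro h α β x y z
    have hm := hμ x y z
    have hn := hν x y z
    -- The coefficient of `α * β`: cancelling the two pure identities leaves the mixed one.
    have hmix : μ (ν x y) z + ν (μ x y) z = μ x (ν y z) + ν x (μ y z) := by
      have hs := h x y z
      simp only [LinearMap.add_apply, map_add] at hs
      rw [hm, hn] at hs
      linear_combination (norm := module) hs
    simp only [LinearMap.add_apply, LinearMap.smul_apply, map_add, map_smul]
    linear_combination (norm := module) (α * α) • hm + (β * β) • hn + (α * β) • hmix
end

section
/- Let k be a field of characteristic zero, V a k-vector space, Ω a nonempty set, and {μ_ω}_{ω∈Ω} a family of bilinear maps V × V → V. Then the following are equivalent: (1) for every finitely supported function c : Ω → k, the bilinear map Σ_ω c_ω μ_ω is associative; (2) each μ_ω is associative and, for all distinct α, β ∈ Ω and all x,y,z ∈ V, μ_β(μ_α(x,y),z) + μ_α(μ_β(x,y),z) = μ_α(x, μ_β(y,z)) + μ_β(x, μ_α(y,z)). -/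
/-- The polarized associator of the family `μ` at the triple `x, y, z`: the failure of
`μ α (μ β x y) z` to equal `μ α x (μ β y z)`. -/
def mixedAssociator {k V Ω : Type*} [Field k] [AddCommGroup V] [Module k V]
    (μ : Ω → (V →ₗ[k] V →ₗ[k] V)) (x y z : V) (α β : Ω) : V :=
  μ α (μ β x y) z - μ α x (μ β y z)

theorem associator_finsupp_sum {k V Ω : Type*} [Field k] [AddCommGroup V] [Module k V]
    (μ : Ω → (V →ₗ[k] V →ₗ[k] V)) (c : Ω →₀ k) (x y z : V) :
    (c.sum fun ω cω => cω • μ ω) ((c.sum fun ω cω => cω • μ ω) x y) z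
        - (c.sum fun ω cω => cω • μ ω) x ((c.sum fun ω cω => cω • μ ω) y z)
      = ∑ α ∈ c.support, ∑ β ∈ c.support, (c α * c β) • mixedAssociator μ x y z α β := by
  have hswap : ∑ α ∈ c.support, ∑ β ∈ c.support, (c α * c β) • mixedAssociator μ x y z α β
      = ∑ α ∈ c.support, ∑ β ∈ c.support, (c α * c β) • mixedAssociator μ x y z β α := by
    conv_lhs => rw [Finset.sum_comm]
    exact Finset.sum_congr rfl fun α _ => Finset.sum_congr rfl fun β _ => by rw [mul_comm]
  rw [hswap]
  simp only [Finsupp.sum, mixedAssociator, LinearMap.sum_apply, LinearMap.smul_apply, map_sum,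
    map_smul, Finset.smul_sum, smul_sub, Finset.sum_sub_distrib, mul_smul]

/-- A quadratic expression in an antisymmetric array vanishes, since `2` is invertible. -/
theorem sum_smul_eq_zero_of_antisymm {k V Ω : Type*} [Field k] [CharZero k] [AddCommGroup V]
    [Module k V] (s : Finset Ω) (c : Ω → k) (A : Ω → Ω → V) (hA : ∀ α β, A α β + A β α = 0) :
    ∑ α ∈ s, ∑ β ∈ s, (c α * c β) • A α β = 0 := by
  have hneg : ∑ α ∈ s, ∑ β ∈ s, (c α * c β) • A α β
      = -∑ α ∈ s, ∑ β ∈ s, (c α * c β) • A α β := by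
    conv_lhs => rw [Finset.sum_comm]
    simp only [← Finset.sum_neg_distrib]
    refine Finset.sum_congr rfl fun α _ => Finset.sum_congr rfl fun β _ => ?_
    rw [mul_comm, ← smul_neg, eq_neg_of_add_eq_zero_left (hA β α)]
  have htwo : (2 : k) • ∑ α ∈ s, ∑ β ∈ s, (c α * c β) • A α β = 0 := by
    rw [two_smul]
    exact eq_neg_iff_add_eq_zero.mp hneg
  exact (smul_eq_zero.mp htwo).resolve_left two_ne_zero

theorem linearly_compatible_assoc_family_iff {k V : Type*} [Field k] [CharZero k]
    [AddCommGroup V] [Module k V] {Ω : Type*} [Nonempty Ω]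
    (μ : Ω → (V →ₗ[k] V →ₗ[k] V)) :
    (∀ c : Ω →₀ k, IsAssociative (c.sum fun ω cω => cω • μ ω)) ↔
      ((∀ ω : Ω, IsAssociative (μ ω)) ∧
        ∀ α β : Ω, α ≠ β → ∀ x y z : V,
          μ β (μ α x y) z + μ α (μ β x y) z
            = μ α x (μ β y z) + μ β x (μ α y z)) := by
  constructor
  · intro h
    have hassoc : ∀ ω : Ω, IsAssociative (μ ω) := fun ω => by
      simpa using h (Finsupp.single ω 1)
    refine ⟨hassoc, fun α β _ x y z => ?_⟩
    have hsum : ((Finsupp.single α (1 : k) + Finsupp.single β 1).sum fun ω cω => cω • μ ω)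
        = μ α + μ β := by
      classical
      rw [Finsupp.sum_add_index (by simp) (by simp [add_smul])]
      simp
    have hαβ := h (Finsupp.single α 1 + Finsupp.single β 1) x y z
    rw [hsum] at hαβ
    simp only [LinearMap.add_apply, map_add] at hαβ
    rw [hassoc α x y z, hassoc β x y z] at hαβ
    rw [← sub_eq_zero] at hαβ ⊢
    rw [← hαβ]
    abel
  · rintro ⟨hassoc, hcompat⟩ c x y z
    rw [← sub_eq_zero, associator_finsupp_sum]
    refine sum_smul_eq_zero_of_antisymm _ _ _ fun α β => ?_
    unfold mixedAssociator
    rcases eq_or_ne α β with rfl | hne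
    · simp [hassoc α x y z]
    · have hzero := sub_eq_zero.mpr (hcompat α β hne x y z)
      rw [← hzero]
      abel
end

section
/- Let k be a field of characteristic zero and V a k-vector space. Let (·₁, P₁) and (·₂, P₂) be two Rota-Baxter algebra structures of weight zero on V. Then for all scalars α, β ∈ k the pair (α·₁ + β·₂, αP₁ + βP₂) is a Rota-Baxter algebra of weight zero if and only if the following hold for all x, y, z ∈ V: (i) (x·₁y)·₂z + (x·₂y)·₁z = x·₁(y·₂z) + x·₂(y·₁z); (ii) P₁(x)·₂P₁(y) + P₁(x)·₁P₂(y) + P₂(x)·₁P₁(y) = P₁(P₁(x)·₂y) + P₁(P₂(x)·₁y) + P₂(P₁(x)·₁y) + P₁(x·₂P₁(y)) + P₁(x·₁P₂(y)) + P₂(x·₁P₁(y)); (iii) the identity obtained from (ii) by interchanging the subscripts 1 and 2 everywhere. -/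
/-!
The associator `x, y, z ↦ μ (μ x y) z - μ x (μ y z)` is quadratic in `μ`, and the Rota-Baxter defect
`x, y ↦ μ (P x) (P y) - P (μ (P x) y) - P (μ x (P y))` is cubic in `(μ, P)`. Along the pencil
`(α • μ₁ + β • μ₂, α • P₁ + β • P₂)` they are therefore homogeneous forms in `α, β` of degree 2 and 3
(`assoc_pencil_eq` and `rotaBaxter_pencil_eq`). Their extreme coefficients are the defects of the two
given structures, hence zero, and the mixed coefficients are the defects of the three compatibility
identities. This gives the backward direction at once. For the forward direction, `(α, β) = (1, 1)`
kills the mixed coefficient of the associator, and `(1, 1)` and `(1, -1)` together show that the two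
mixed coefficients of the Rota-Baxter defect have zero sum and zero difference, so that both vanish
as `2 ≠ 0` in `k`.
-/

/-- A Rota-Baxter algebra structure of weight zero on `V`: an associative bilinear
multiplication `μ` together with a linear operator `P` satisfying the Rota-Baxter
identity of weight zero. -/
def IsRotaBaxter {k V : Type*} [Field k] [AddCommGroup V] [Module k V]
    (μ : V →ₗ[k] V →ₗ[k] V) (P : V →ₗ[k] V) : Prop :=
  (∀ x y z : V, μ (μ x y) z = μ x (μ y z)) ∧
    (∀ x y : V, μ (P x) (P y) = P (μ (P x) y) + P (μ x (P y)))

/-- The associator of `α • μ₁ + β • μ₂`, when `μ₁` and `μ₂` are associative, is `α * β` times the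
defect of the mixed associativity identity. -/
lemma assoc_pencil_eq {k V : Type*} [Field k] [AddCommGroup V] [Module k V]
    {μ₁ μ₂ : V →ₗ[k] V →ₗ[k] V} {P₁ P₂ : V →ₗ[k] V}
    (h₁ : IsRotaBaxter μ₁ P₁) (h₂ : IsRotaBaxter μ₂ P₂) (α β : k) (x y z : V) :
    (α • μ₁ + β • μ₂) ((α • μ₁ + β • μ₂) x y) z - (α • μ₁ + β • μ₂) x ((α • μ₁ + β • μ₂) y z)
      = (α * β) • ((μ₂ (μ₁ x y) z + μ₁ (μ₂ x y) z) - (μ₁ x (μ₂ y z) + μ₂ x (μ₁ y z))) := by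
  simp only [LinearMap.add_apply, LinearMap.smul_apply, map_add, map_smul, h₁.1 x y z, h₂.1 x y z]
  module

/-- The Rota-Baxter defect of the pencil, when both given pairs are Rota-Baxter, consists of the
two mixed terms of degrees `(2, 1)` and `(1, 2)` in `(α, β)`. -/
lemma rotaBaxter_pencil_eq {k V : Type*} [Field k] [AddCommGroup V] [Module k V]
    {μ₁ μ₂ : V →ₗ[k] V →ₗ[k] V} {P₁ P₂ : V →ₗ[k] V}
    (h₁ : IsRotaBaxter μ₁ P₁) (h₂ : IsRotaBaxter μ₂ P₂) (α β : k) (x y : V) :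
    (α • μ₁ + β • μ₂) ((α • P₁ + β • P₂) x) ((α • P₁ + β • P₂) y)
        - ((α • P₁ + β • P₂) ((α • μ₁ + β • μ₂) ((α • P₁ + β • P₂) x) y)
          + (α • P₁ + β • P₂) ((α • μ₁ + β • μ₂) x ((α • P₁ + β • P₂) y)))
      = (α ^ 2 * β) • ((μ₂ (P₁ x) (P₁ y) + μ₁ (P₁ x) (P₂ y) + μ₁ (P₂ x) (P₁ y))
            - (P₁ (μ₂ (P₁ x) y) + P₁ (μ₁ (P₂ x) y) + P₂ (μ₁ (P₁ x) y)
              + P₁ (μ₂ x (P₁ y)) + P₁ (μ₁ x (P₂ y)) + P₂ (μ₁ x (P₁ y))))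
        + (α * β ^ 2) • ((μ₁ (P₂ x) (P₂ y) + μ₂ (P₂ x) (P₁ y) + μ₂ (P₁ x) (P₂ y))
            - (P₂ (μ₁ (P₂ x) y) + P₂ (μ₂ (P₁ x) y) + P₁ (μ₂ (P₂ x) y)
              + P₂ (μ₁ x (P₂ y)) + P₂ (μ₂ x (P₁ y)) + P₁ (μ₂ x (P₂ y)))) := by
  simp only [LinearMap.add_apply, LinearMap.smul_apply, map_add, map_smul, h₁.2 x y, h₂.2 x y]
  module

/-- Evaluating `α ^ 2 * β` and `α * β ^ 2` at `(1, 1)` and `(1, -1)` separates the coefficients. -/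
lemma eq_zero_of_pencil_eq_zero {k V : Type*} [Field k] [CharZero k] [AddCommGroup V] [Module k V]
    {A B : V} (h : ∀ α β : k, (α ^ 2 * β) • A + (α * β ^ 2) • B = 0) : A = 0 ∧ B = 0 := by
  have hp := h 1 1
  have hm := h 1 (-1)
  have h2 : (2 : k) ≠ 0 := two_ne_zero
  constructor
  · refine (smul_eq_zero.mp (?_ : (2 : k) • A = 0)).resolve_left h2
    linear_combination (norm := module) (1 : k) • hp - (1 : k) • hm
  · refine (smul_eq_zero.mp (?_ : (2 : k) • B = 0)).resolve_left h2
    linear_combination (norm := module) (1 : k) • hp + (1 : k) • hm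

theorem linearly_compatible_rota_baxter_iff {k V : Type*} [Field k] [CharZero k]
    [AddCommGroup V] [Module k V]
    (μ₁ μ₂ : V →ₗ[k] V →ₗ[k] V) (P₁ P₂ : V →ₗ[k] V)
    (h₁ : IsRotaBaxter μ₁ P₁) (h₂ : IsRotaBaxter μ₂ P₂) :
    (∀ α β : k, IsRotaBaxter (α • μ₁ + β • μ₂) (α • P₁ + β • P₂)) ↔
      ((∀ x y z : V,
          μ₂ (μ₁ x y) z + μ₁ (μ₂ x y) z = μ₁ x (μ₂ y z) + μ₂ x (μ₁ y z)) ∧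
        (∀ x y : V,
          μ₂ (P₁ x) (P₁ y) + μ₁ (P₁ x) (P₂ y) + μ₁ (P₂ x) (P₁ y)
            = P₁ (μ₂ (P₁ x) y) + P₁ (μ₁ (P₂ x) y) + P₂ (μ₁ (P₁ x) y)
              + P₁ (μ₂ x (P₁ y)) + P₁ (μ₁ x (P₂ y)) + P₂ (μ₁ x (P₁ y))) ∧
        (∀ x y : V,
          μ₁ (P₂ x) (P₂ y) + μ₂ (P₂ x) (P₁ y) + μ₂ (P₁ x) (P₂ y)
            = P₂ (μ₁ (P₂ x) y) + P₂ (μ₂ (P₁ x) y) + P₁ (μ₂ (P₂ x) y)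
              + P₂ (μ₁ x (P₂ y)) + P₂ (μ₂ x (P₁ y)) + P₁ (μ₂ x (P₂ y)))) := by
  constructor
  · intro h
    have key := fun x y => eq_zero_of_pencil_eq_zero fun α β =>
      (rotaBaxter_pencil_eq h₁ h₂ α β x y).symm.trans (sub_eq_zero.mpr ((h α β).2 x y))
    refine ⟨fun x y z => ?_, fun x y => sub_eq_zero.mp (key x y).1,
      fun x y => sub_eq_zero.mp (key x y).2⟩
    have e := assoc_pencil_eq h₁ h₂ 1 1 x y z
    rw [sub_eq_zero.mpr ((h 1 1).1 x y z), mul_one, one_smul] at e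
    exact sub_eq_zero.mp e.symm
  · rintro ⟨hA, hB, hC⟩ α β
    refine ⟨fun x y z => sub_eq_zero.mp ?_, fun x y => sub_eq_zero.mp ?_⟩
    · rw [assoc_pencil_eq h₁ h₂, sub_eq_zero.mpr (hA x y z), smul_zero]
    · rw [rotaBaxter_pencil_eq h₁ h₂, sub_eq_zero.mpr (hB x y), sub_eq_zero.mpr (hC x y),
        smul_zero, smul_zero, add_zero]
end

section
/- Let k be a field of characteristic zero, V a k-vector space, Ω a nonempty set, and for each ω ∈ Ω let ·_ω : V × V → V be bilinear and d_ω : V → V be k-linear. Then the following are equivalent: (1) for every finitely supported function c : Ω → k, the pair (Σ_ω c_ω ·_ω, Σ_ω c_ω d_ω) is a differential algebra on V; (2) each (·_ω, d_ω) is a differential algebra and, for all distinct α, β ∈ Ω and all x,y,z ∈ V, (x·_αy)·_βz + (x·_βy)·_αz = x·_α(y·_βz) + x·_β(y·_αz) and d_α(x·_βy) + d_β(x·_αy) = d_α(x)·_βy + x·_βd_α(y) + d_β(x)·_αy + x·_αd_β(y). -/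
/-!
Fix the vectors `x, y, z`. The associator of a linear combination `∑ c_ω ·_ω`, and the failure of
the Leibniz rule for it and `∑ c_ω d_ω`, are both quadratic forms `∑ c_α c_β Q(α, β)` in `c` with
coefficients `Q(α, β)` in `V`. Such a form vanishes for every `c` exactly when its coefficients
`Q(α, α)` and its polarization `Q(α, β) + Q(β, α)`, `α ≠ β`, vanish (`quadratic_form_vanishes_iff`). For
the associator and the Leibniz defect these coefficients give the differential algebra axioms for
each `ω` and the two compatibility identities.
-/

/-- A differential algebra structure on `V`: an associative bilinear
multiplication `μ` together with a linear operator `d` satisfying the Leibniz rule. -/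
def IsDifferentialAlgebra {k V : Type*} [Field k] [AddCommGroup V] [Module k V]
    (μ : V →ₗ[k] V →ₗ[k] V) (d : V →ₗ[k] V) : Prop :=
  (∀ x y z : V, μ (μ x y) z = μ x (μ y z)) ∧
    (∀ x y : V, d (μ x y) = μ (d x) y + μ x (d y))

/-- A finitely supported quadratic form with vector coefficients is identically zero iff its
diagonal coefficients and its symmetrized off-diagonal coefficients are zero. -/
lemma quadratic_form_vanishes_iff {k V Ω : Type*} [Field k] [CharZero k]
    [AddCommGroup V] [Module k V] (Q : Ω → Ω → V) :
    (∀ c : Ω →₀ k, (c.sum fun α a => c.sum fun β b => a • b • Q α β) = 0) ↔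
      (∀ ω, Q ω ω = 0) ∧ ∀ α β, α ≠ β → Q α β + Q β α = 0 := by
  classical
  constructor
  · intro h
    have diag : ∀ ω, Q ω ω = 0 := fun ω => by simpa using h (Finsupp.single ω 1)
    refine ⟨diag, fun α β _ => ?_⟩
    have key := h (Finsupp.single α 1 + Finsupp.single β 1)
    have inner : ∀ γ (a : k), ((Finsupp.single α (1 : k) + Finsupp.single β 1).sum
        fun δ b => a • b • Q γ δ) = a • (Q γ α + Q γ β) := by
      intro γ a
      rw [Finsupp.sum_add_index' (by simp) (by simp [add_smul])]
      simp
    simp only [inner] at key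
    rw [Finsupp.sum_add_index' (by simp) fun _ _ _ => add_smul _ _ _] at key
    simpa [diag] using key
  · rintro ⟨diag, off⟩ c
    have sym : ∀ α β, Q α β = -Q β α := by
      intro α β
      by_cases e : α = β
      · subst e
        simp [diag]
      · exact eq_neg_of_add_eq_zero_left (off α β e)
    -- Exchanging the two summation indices shows that the sum equals its own negative.
    have neg : (c.sum fun α a => c.sum fun β b => a • b • Q α β) =
        -(c.sum fun α a => c.sum fun β b => a • b • Q α β) := by
      simp only [Finsupp.sum, ← Finset.sum_neg_distrib]
      rw [Finset.sum_comm]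
      refine Finset.sum_congr rfl fun α _ => Finset.sum_congr rfl fun β _ => ?_
      rw [sym β α, smul_neg, smul_neg, smul_comm]
    have two : (2 : k) • (c.sum fun α a => c.sum fun β b => a • b • Q α β) = 0 := by
      rw [two_smul]
      exact eq_neg_iff_add_eq_zero.mp neg
    exact (smul_eq_zero.mp two).resolve_left two_ne_zero

/-- The associator of a linear combination of multiplications, as a quadratic form in the
coefficients. -/
lemma associator_sum {k V Ω : Type*} [Field k] [AddCommGroup V] [Module k V]
    (μ : Ω → (V →ₗ[k] V →ₗ[k] V)) (c : Ω →₀ k) (x y z : V) :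
    (c.sum fun ω a => a • μ ω) ((c.sum fun ω a => a • μ ω) x y) z -
        (c.sum fun ω a => a • μ ω) x ((c.sum fun ω a => a • μ ω) y z) =
      c.sum fun α a => c.sum fun β b =>
        a • b • (μ β (μ α x y) z - μ α x (μ β y z)) := by
  simp only [Finsupp.sum, LinearMap.sum_apply, LinearMap.smul_apply, map_sum, map_smul,
    Finset.smul_sum, smul_sub, Finset.sum_sub_distrib]
  congr 1
  rw [Finset.sum_comm]
  exact Finset.sum_congr rfl fun α _ => Finset.sum_congr rfl fun β _ => smul_comm _ _ _

/-- The failure of the Leibniz rule for linear combinations, as a quadratic form in the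
coefficients. -/
lemma leibniz_defect_sum {k V Ω : Type*} [Field k] [AddCommGroup V] [Module k V]
    (μ : Ω → (V →ₗ[k] V →ₗ[k] V)) (d : Ω → (V →ₗ[k] V)) (c : Ω →₀ k) (x y : V) :
    (c.sum fun ω a => a • d ω) ((c.sum fun ω a => a • μ ω) x y) -
        ((c.sum fun ω a => a • μ ω) ((c.sum fun ω a => a • d ω) x) y +
          (c.sum fun ω a => a • μ ω) x ((c.sum fun ω a => a • d ω) y)) =
      c.sum fun α a => c.sum fun β b =>
        a • b • (d α (μ β x y) - (μ β (d α x) y + μ β x (d α y))) := by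
  simp only [Finsupp.sum, LinearMap.sum_apply, LinearMap.smul_apply, map_sum, map_smul,
    Finset.smul_sum, smul_sub, smul_add, Finset.sum_sub_distrib, Finset.sum_add_distrib]
  congr 1
  rw [Finset.sum_comm]
  exact Finset.sum_congr rfl fun α _ => Finset.sum_congr rfl fun β _ => smul_comm _ _ _

theorem linearly_compatible_differential_iff {k V : Type*} [Field k] [CharZero k]
    [AddCommGroup V] [Module k V] {Ω : Type*} [Nonempty Ω]
    (μ : Ω → (V →ₗ[k] V →ₗ[k] V)) (d : Ω → (V →ₗ[k] V)) :
    (∀ c : Ω →₀ k,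
        IsDifferentialAlgebra (c.sum fun ω cω => cω • μ ω)
          (c.sum fun ω cω => cω • d ω)) ↔
      ((∀ ω : Ω, IsDifferentialAlgebra (μ ω) (d ω)) ∧
        ∀ α β : Ω, α ≠ β →
          (∀ x y z : V,
            μ β (μ α x y) z + μ α (μ β x y) z
              = μ α x (μ β y z) + μ β x (μ α y z)) ∧
          (∀ x y : V,
            d α (μ β x y) + d β (μ α x y)
              = μ β (d α x) y + μ β x (d α y) + μ α (d β x) y + μ α x (d β y))) := by
  have assoc := fun x y z =>
    quadratic_form_vanishes_iff (k := k) fun α β => μ β (μ α x y) z - μ α x (μ β y z)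
  have leib := fun x y => quadratic_form_vanishes_iff (k := k)
    fun α β => d α (μ β x y) - (μ β (d α x) y + μ β x (d α y))
  simp only [← associator_sum, ← leibniz_defect_sum] at assoc leib
  constructor
  · intro h
    have hA := fun x y z => (assoc x y z).mp fun c => sub_eq_zero.mpr ((h c).1 x y z)
    have hL := fun x y => (leib x y).mp fun c => sub_eq_zero.mpr ((h c).2 x y)
    refine ⟨fun ω => ⟨fun x y z => sub_eq_zero.mp ((hA x y z).1 ω),
      fun x y => sub_eq_zero.mp ((hL x y).1 ω)⟩, fun α β e => ⟨fun x y z => ?_, fun x y => ?_⟩⟩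
    · rw [← sub_eq_zero, ← (hA x y z).2 α β e]
      abel
    · rw [← sub_eq_zero, ← (hL x y).2 α β e]
      abel
  · rintro ⟨h, hc⟩ c
    refine ⟨fun x y z => sub_eq_zero.mp ((assoc x y z).mpr ⟨fun ω => ?_, fun α β e => ?_⟩ c),
      fun x y => sub_eq_zero.mp ((leib x y).mpr ⟨fun ω => ?_, fun α β e => ?_⟩ c)⟩
    · exact sub_eq_zero.mpr ((h ω).1 x y z)
    · rw [← sub_eq_zero.mpr ((hc α β e).1 x y z)]
      abel
    · exact sub_eq_zero.mpr ((h ω).2 x y)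
    · rw [← sub_eq_zero.mpr ((hc α β e).2 x y)]
      abel
end

section
/- Let k be a field, V a k-vector space, Ω a nonempty set, and {μ_ω}_{ω∈Ω} a family of bilinear maps V × V → V satisfying matching associativity, i.e., μ_β(μ_α(x,y),z) = μ_α(x, μ_β(y,z)) for all α, β ∈ Ω and all x,y,z ∈ V. Then for every finitely supported function c : Ω → k, the bilinear map Σ_ω c_ω μ_ω is associative. -/
theorem matching_assoc_implies_linear_compatible {k V : Type*} [Field k]
    [AddCommGroup V] [Module k V] {Ω : Type*} [Nonempty Ω]
    (μ : Ω → (V →ₗ[k] V →ₗ[k] V))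
    (hmatch : ∀ α β : Ω, ∀ x y z : V, μ β (μ α x y) z = μ α x (μ β y z)) :
    ∀ c : Ω →₀ k, IsAssociative (c.sum fun ω cω => cω • μ ω) := by
  intro c x y z
  simp only [Finsupp.sum, LinearMap.sum_apply, LinearMap.smul_apply, map_sum, map_smul,
    Finset.smul_sum]
  -- Both sides are double sums over the support of `c`; after exchanging the order of summation
  -- they agree term by term by matching associativity.
  rw [Finset.sum_comm]
  refine Finset.sum_congr rfl fun α _ => Finset.sum_congr rfl fun β _ => ?_
  rw [hmatch β α x y z, smul_comm]
end

section
/- Let k be a field, V a k-vector space, Ω a nonempty set, and for each ω ∈ Ω let ·_ω : V × V → V be bilinear and P_ω : V → V be k-linear. Assume: (i) the family {·_ω} satisfies matching associativity, i.e., (x·_αy)·_βz = x·_α(y·_βz) for all α,β ∈ Ω; (ii) for all α, β, γ ∈ Ω and all x,y ∈ V, P_α(x) ·_γ P_β(y) = P_β(P_α(x) ·_γ y) + P_α(x ·_γ P_β(y)). Then for every finitely supported function c : Ω → k, the pair (Σ_ω c_ω ·_ω, Σ_ω c_ω P_ω) is a Rota-Baxter algebra of weight zero on V. -/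
theorem matching_rota_baxter_implies_linear_compatible {k V : Type*} [Field k]
    [AddCommGroup V] [Module k V] {Ω : Type*} [Nonempty Ω]
    (μ : Ω → (V →ₗ[k] V →ₗ[k] V)) (P : Ω → (V →ₗ[k] V))
    (hmatch : ∀ α β : Ω, ∀ x y z : V, μ β (μ α x y) z = μ α x (μ β y z))
    (hrb : ∀ α β γ : Ω, ∀ x y : V,
      μ γ (P α x) (P β y) = P β (μ γ (P α x) y) + P α (μ γ x (P β y))) :
    ∀ c : Ω →₀ k,
      IsRotaBaxter (c.sum fun ω cω => cω • μ ω) (c.sum fun ω cω => cω • P ω) := by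
  intro c
  set M : V →ₗ[k] V →ₗ[k] V := c.sum fun ω cω => cω • μ ω with hM
  set Q : V →ₗ[k] V := c.sum fun ω cω => cω • P ω with hQ
  have M_apply (x y : V) : M x y = ∑ ω ∈ c.support, c ω • μ ω x y := by
    simp [hM, Finsupp.sum, LinearMap.sum_apply]
  have Q_apply (x : V) : Q x = ∑ ω ∈ c.support, c ω • P ω x := by
    simp [hQ, Finsupp.sum, LinearMap.sum_apply]
  have assoc_left (β : Ω) (x y z : V) : μ β (M x y) z = M x (μ β y z) := by
    simp only [M_apply, map_sum, map_smul, LinearMap.sum_apply, LinearMap.smul_apply, hmatch]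
  have rb_mul (α β : Ω) (x y : V) :
      M (P α x) (P β y) = P β (M (P α x) y) + P α (M x (P β y)) := by
    simp only [M_apply, map_sum, map_smul, hrb, smul_add, Finset.sum_add_distrib]
  have rb_right (α : Ω) (x y : V) :
      M (P α x) (Q y) = Q (M (P α x) y) + P α (M x (Q y)) := by
    simp only [Q_apply, map_sum, map_smul, rb_mul, smul_add, Finset.sum_add_distrib]
  refine ⟨fun x y z => ?_, fun x y => ?_⟩
  · rw [M_apply (M x y) z, M_apply y z]
    simp only [assoc_left, map_sum, map_smul]
  · -- Only the occurrences of `Q` in the place of `P α` in `rb_right` are expanded.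
    rw [Q_apply x, Q_apply (M x (Q y))]
    simp only [map_sum, map_smul, LinearMap.sum_apply, LinearMap.smul_apply, rb_right, smul_add,
      Finset.sum_add_distrib]
end

section
/- Let k be a field, V a k-vector space, Ω a nonempty set, and for each ω ∈ Ω let ·_ω : V × V → V be bilinear and P_ω : V → V be k-linear. For α, β, γ ∈ Ω define E(α,β,γ)(x,y) := P_α(x) ·_γ P_β(y) − P_β(P_α(x) ·_γ y) − P_α(x ·_γ P_β(y)). Assume: (i) each (·_ω, P_ω) is a Rota-Baxter algebra of weight zero; (ii) for all distinct α, β ∈ Ω, (x·_αy)·_βz + (x·_βy)·_αz = x·_α(y·_βz) + x·_β(y·_αz) for all x,y,z ∈ V; (iii) for all distinct α, β ∈ Ω, E(α,α,β) + E(α,β,α) + E(β,α,α) = 0 as a bilinear map; (iv) for all pairwise distinct α, β, γ ∈ Ω, E(α,β,γ) = 0. Then for every finitely supported function c : Ω → k, the pair (Σ_ω c_ω ·_ω, Σ_ω c_ω P_ω) is a Rota-Baxter algebra of weight zero on V. -/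
/-!
Write `μ'` and `P'` for the combined multiplication and operator. The associator of `μ'` and
the Rota-Baxter defect of `(μ', P')` are respectively quadratic and cubic in the coefficients
`c`: the first is `∑ c α * c β • A α β`, with `A α β` the mixed associator
`(x ·_α y) ·_β z - x ·_α (y ·_β z)`, and the second is `∑ c α * c β * c γ • E α β γ`.
By hypothesis the terms belonging to each monomial in the `c`'s add up to zero: this is `h1` for
the pure powers, `h2` for `c α * c β`, `h3` for `c α ^ 2 * c β`, and `h4`, term by term, for
products of three distinct `c`'s. The lemmas
`sum_sum_eq_zero_of_alternating` and `sum_sum_sum_eq_zero` do the collecting; neither divides by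
anything, so the characteristic of `k` is irrelevant.
-/

theorem sum_sum_eq_zero_of_alternating {ι V : Type*} [AddCommGroup V] (s : Finset ι)
    (f : ι → ι → V) (h1 : ∀ a, f a a = 0) (h2 : ∀ a b, a ≠ b → f a b + f b a = 0) :
    ∑ a ∈ s, ∑ b ∈ s, f a b = 0 := by
  rw [← Finset.sum_product']
  refine Finset.sum_involution (fun p _ => p.swap) ?_ ?_ ?_ ?_
  · rintro ⟨a, b⟩ _
    by_cases h : a = b
    · subst h
      simp [h1]
    · exact h2 a b h
  · rintro ⟨a, b⟩ _ hne h
    simp only [Prod.swap_prod_mk, Prod.mk.injEq] at h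
    exact hne (by simp [h.1, h1])
  · rintro ⟨a, b⟩ h
    simp only [Finset.mem_product, Prod.swap_prod_mk] at h ⊢
    exact h.symm
  · rintro ⟨a, b⟩ _
    rfl

/-- The cubic analogue of `sum_sum_eq_zero_of_alternating`. Only the triples with exactly two
equal entries contribute; they are parametrised by the repeated entry and the other one, and
the three positions of the latter cancel. -/
theorem sum_sum_sum_eq_zero {ι V : Type*} [AddCommGroup V] (s : Finset ι)
    (f : ι → ι → ι → V) (h1 : ∀ a, f a a a = 0)
    (h3 : ∀ a b, a ≠ b → f a a b + f a b a + f b a a = 0)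
    (h4 : ∀ a b c, a ≠ b → b ≠ c → a ≠ c → f a b c = 0) :
    ∑ a ∈ s, ∑ b ∈ s, ∑ c ∈ s, f a b c = 0 := by
  classical
  -- At most one of the three conditions holds unless `a = b = c`, where every term vanishes.
  have key : ∀ a b c, f a b c = (if a = b then f a a c else 0) + (if a = c then f a b a else 0)
      + (if b = c then f a b b else 0) := by
    intro a b c
    by_cases hab : a = b
    · subst hab
      by_cases hac : a = c
      · subst hac
        simp [h1]
      · simp [hac]
    · by_cases hac : a = c
      · subst hac
        simp [hab, Ne.symm hab]
      · by_cases hbc : b = c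
        · subst hbc
          simp [hab]
        · simp [hab, hac, hbc, h4 a b c hab hbc hac]
  have e1 : ∑ a ∈ s, ∑ b ∈ s, ∑ c ∈ s, (if a = b then f a a c else 0)
      = ∑ a ∈ s, ∑ b ∈ s, f a a b := by
    refine Finset.sum_congr rfl fun a ha => ?_
    rw [Finset.sum_comm]
    simp [ha]
  have e2 : ∑ a ∈ s, ∑ b ∈ s, ∑ c ∈ s, (if a = c then f a b a else 0)
      = ∑ a ∈ s, ∑ b ∈ s, f a b a := by
    refine Finset.sum_congr rfl fun a ha => ?_
    simp [ha]
  have e3 : ∑ a ∈ s, ∑ b ∈ s, ∑ c ∈ s, (if b = c then f a b b else 0)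
      = ∑ a ∈ s, ∑ b ∈ s, f b a a := by
    rw [Finset.sum_comm]
    refine Finset.sum_congr rfl fun b hb => ?_
    simp [hb]
  rw [Finset.sum_congr rfl fun a _ => Finset.sum_congr rfl fun b _ =>
    Finset.sum_congr rfl fun c _ => key a b c]
  simp only [Finset.sum_add_distrib]
  rw [e1, e2, e3]
  simp only [← Finset.sum_add_distrib]
  refine Finset.sum_eq_zero fun a _ => Finset.sum_eq_zero fun b _ => ?_
  by_cases h : a = b
  · subst h
    simp [h1]
  · exact h3 a b h

theorem linearly_compatible_rota_baxter_family {k V : Type*} [Field k]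
    [AddCommGroup V] [Module k V] {Ω : Type*} [Nonempty Ω]
    (μ : Ω → (V →ₗ[k] V →ₗ[k] V)) (P : Ω → (V →ₗ[k] V))
    (E : Ω → Ω → Ω → V → V → V)
    (hE : ∀ α β γ : Ω, ∀ x y : V,
      E α β γ x y
        = μ γ (P α x) (P β y) - P β (μ γ (P α x) y) - P α (μ γ x (P β y)))
    (h1 : ∀ ω : Ω, IsRotaBaxter (μ ω) (P ω))
    (h2 : ∀ α β : Ω, α ≠ β → ∀ x y z : V,
      μ β (μ α x y) z + μ α (μ β x y) z = μ α x (μ β y z) + μ β x (μ α y z))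
    (h3 : ∀ α β : Ω, α ≠ β → ∀ x y : V,
      E α α β x y + E α β α x y + E β α α x y = 0)
    (h4 : ∀ α β γ : Ω, α ≠ β → β ≠ γ → α ≠ γ → ∀ x y : V, E α β γ x y = 0) :
    ∀ c : Ω →₀ k,
      IsRotaBaxter (c.sum fun ω cω => cω • μ ω) (c.sum fun ω cω => cω • P ω) := by
  intro c
  -- Evaluating the combined maps only through `hμ` and `hP` controls the order of summation.
  have hμ : ∀ x y, (c.sum fun ω cω => cω • μ ω) x y = ∑ a ∈ c.support, c a • μ a x y := by
    intro x y
    simp [Finsupp.sum, LinearMap.sum_apply]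
  have hP : ∀ x, (c.sum fun ω cω => cω • P ω) x = ∑ a ∈ c.support, c a • P a x := by
    intro x
    simp [Finsupp.sum, LinearMap.sum_apply]
  refine ⟨fun x y z => ?_, fun x y => ?_⟩
  · simp only [hμ, map_sum, map_smul, LinearMap.sum_apply, LinearMap.smul_apply,
      Finset.smul_sum]
    rw [← sub_eq_zero]
    simp only [← Finset.sum_sub_distrib]
    refine sum_sum_eq_zero_of_alternating _ _ (fun a => ?_) (fun a b hab => ?_)
    · rw [(h1 a).1, sub_self]
    · have h : (c a * c b) • (μ b (μ a x y) z + μ a (μ b x y) z)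
          = (c a * c b) • (μ a x (μ b y z) + μ b x (μ a y z)) := by rw [h2 a b hab]
      rw [← sub_eq_zero] at h
      rw [← h]
      module
  · have s1 : (c.sum fun ω cω => cω • μ ω) ((c.sum fun ω cω => cω • P ω) x)
          ((c.sum fun ω cω => cω • P ω) y)
        = ∑ α ∈ c.support, ∑ β ∈ c.support, ∑ γ ∈ c.support,
          (c α * c β * c γ) • μ γ (P α x) (P β y) := by
      simp only [hP, map_sum, map_smul, LinearMap.sum_apply, LinearMap.smul_apply]
      simp only [hμ, Finset.smul_sum, smul_smul]
      rw [Finset.sum_comm]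
      exact Finset.sum_congr rfl fun a _ => Finset.sum_congr rfl fun b _ =>
        Finset.sum_congr rfl fun d _ => by congr 1; ring
    have s2 : (c.sum fun ω cω => cω • P ω) ((c.sum fun ω cω => cω • μ ω)
          ((c.sum fun ω cω => cω • P ω) x) y)
        = ∑ α ∈ c.support, ∑ β ∈ c.support, ∑ γ ∈ c.support,
          (c α * c β * c γ) • P β (μ γ (P α x) y) := by
      rw [hP x]
      simp only [map_sum, map_smul, LinearMap.sum_apply, LinearMap.smul_apply]
      simp only [hP, hμ, map_sum, map_smul, Finset.smul_sum, smul_smul]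
      exact Finset.sum_congr rfl fun a _ => Finset.sum_congr rfl fun b _ =>
        Finset.sum_congr rfl fun d _ => by congr 1; ring
    have s3 : (c.sum fun ω cω => cω • P ω) ((c.sum fun ω cω => cω • μ ω) x
          ((c.sum fun ω cω => cω • P ω) y))
        = ∑ α ∈ c.support, ∑ β ∈ c.support, ∑ γ ∈ c.support,
          (c α * c β * c γ) • P α (μ γ x (P β y)) := by
      rw [hP y, Finset.sum_comm]
      simp only [map_sum, map_smul]
      simp only [hP, hμ, map_sum, map_smul, Finset.smul_sum, smul_smul]
      exact Finset.sum_congr rfl fun a _ => Finset.sum_congr rfl fun b _ =>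
        Finset.sum_congr rfl fun d _ => by congr 1; ring
    rw [s1, s2, s3, ← sub_eq_zero, ← sub_sub]
    simp only [← Finset.sum_sub_distrib, ← smul_sub, ← hE]
    refine sum_sum_sum_eq_zero _ _ (fun a => ?_) (fun a b hab => ?_)
      (fun a b d hab hbd had => ?_)
    · rw [hE, (h1 a).2, add_sub_cancel_left, sub_self, smul_zero]
    · have h : (c a * c a * c b) • (E a a b x y + E a b a x y + E b a a x y) = 0 := by
        rw [h3 a b hab, smul_zero]
      rw [← h]
      module
    · rw [h4 a b d hab hbd had, smul_zero]
end

section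
/- Let k be a field of characteristic zero and V a k-vector space. Let (·₁, P₁) and (·₂, P₂) be two Nijenhuis algebra structures on V. Then for all scalars α, β ∈ k the pair (α·₁ + β·₂, αP₁ + βP₂) is a Nijenhuis algebra if and only if the following hold for all x, y, z ∈ V: (i) (x·₁y)·₂z + (x·₂y)·₁z = x·₁(y·₂z) + x·₂(y·₁z); (ii) P₁(x)·₂P₁(y) + P₁(x)·₁P₂(y) + P₂(x)·₁P₁(y) = P₁(P₁(x)·₂y) + P₁(P₂(x)·₁y) + P₂(P₁(x)·₁y) + P₁(x·₂P₁(y)) + P₁(x·₁P₂(y)) + P₂(x·₁P₁(y)) − P₁(P₁(x·₂y)) − P₁(P₂(x·₁y)) − P₂(P₁(x·₁y)); (iii) the identity obtained from (ii) by interchanging the subscripts 1 and 2 everywhere. -/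
/-!
For the combined pair `(α • μ₁ + β • μ₂, α • P₁ + β • P₂)`, the defect of associativity is a
homogeneous quadratic polynomial in `(α, β)` with coefficients in `V`, and the defect of the
Nijenhuis identity is a homogeneous cubic one (`assocDefect_comb`, `nijDefect_comb`). The pure
coefficients are the defects of the two given structures, so they vanish; the mixed ones are the
differences of the two sides of the compatibility identities. Hence these identities suffice.
Conversely, `(α, β) = (1, 1)` isolates the only mixed quadratic coefficient, while `(1, 1)` and
`(1, -1)` give the sum and the difference of the two mixed cubic coefficients, which therefore
vanish because `2` is invertible.
-/

/-- A Nijenhuis algebra structure on `V`: an associative bilinear multiplication `μ`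
together with a linear operator `P` satisfying the Nijenhuis identity. -/
def IsNijenhuis {k V : Type*} [Field k] [AddCommGroup V] [Module k V]
    (μ : V →ₗ[k] V →ₗ[k] V) (P : V →ₗ[k] V) : Prop :=
  (∀ x y z : V, μ (μ x y) z = μ x (μ y z)) ∧
    (∀ x y : V, μ (P x) (P y) = P (μ (P x) y) + P (μ x (P y)) - P (P (μ x y)))

section Defects

variable {k V : Type*} [Field k] [AddCommGroup V] [Module k V]

/-- The associator `(x · y) · z - x · (y · z)`. -/
def assocDefect (μ : V →ₗ[k] V →ₗ[k] V) (x y z : V) : V :=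
  μ (μ x y) z - μ x (μ y z)

/-- The difference of the two sides of the Nijenhuis identity. -/
def nijDefect (μ : V →ₗ[k] V →ₗ[k] V) (P : V →ₗ[k] V) (x y : V) : V :=
  μ (P x) (P y) - (P (μ (P x) y) + P (μ x (P y)) - P (P (μ x y)))

/-- The `α * β` coefficient of the associator of `α • μ₁ + β • μ₂`. -/
def mixedAssoc (μ₁ μ₂ : V →ₗ[k] V →ₗ[k] V) (x y z : V) : V :=
  μ₂ (μ₁ x y) z + μ₁ (μ₂ x y) z - (μ₁ x (μ₂ y z) + μ₂ x (μ₁ y z))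

/-- The `α ^ 2 * β` coefficient of the Nijenhuis defect of the combined pair. The `α * β ^ 2`
coefficient is obtained by exchanging the indices. -/
def mixedNij (μ₁ μ₂ : V →ₗ[k] V →ₗ[k] V) (P₁ P₂ : V →ₗ[k] V) (x y : V) : V :=
  μ₂ (P₁ x) (P₁ y) + μ₁ (P₁ x) (P₂ y) + μ₁ (P₂ x) (P₁ y)
    - (P₁ (μ₂ (P₁ x) y) + P₁ (μ₁ (P₂ x) y) + P₂ (μ₁ (P₁ x) y)
      + P₁ (μ₂ x (P₁ y)) + P₁ (μ₁ x (P₂ y)) + P₂ (μ₁ x (P₁ y))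
      - P₁ (P₁ (μ₂ x y)) - P₁ (P₂ (μ₁ x y)) - P₂ (P₁ (μ₁ x y)))

theorem isNijenhuis_iff_defects (μ : V →ₗ[k] V →ₗ[k] V) (P : V →ₗ[k] V) :
    IsNijenhuis μ P ↔ (∀ x y z, assocDefect μ x y z = 0) ∧ ∀ x y, nijDefect μ P x y = 0 := by
  simp only [IsNijenhuis, assocDefect, nijDefect, sub_eq_zero]

theorem assocDefect_comb (μ₁ μ₂ : V →ₗ[k] V →ₗ[k] V) (α β : k) (x y z : V) :
    assocDefect (α • μ₁ + β • μ₂) x y z =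
      α ^ 2 • assocDefect μ₁ x y z + (α * β) • mixedAssoc μ₁ μ₂ x y z
        + β ^ 2 • assocDefect μ₂ x y z := by
  simp only [assocDefect, mixedAssoc, LinearMap.add_apply, LinearMap.smul_apply, map_add, map_smul]
  module

theorem nijDefect_comb (μ₁ μ₂ : V →ₗ[k] V →ₗ[k] V) (P₁ P₂ : V →ₗ[k] V) (α β : k) (x y : V) :
    nijDefect (α • μ₁ + β • μ₂) (α • P₁ + β • P₂) x y =
      α ^ 3 • nijDefect μ₁ P₁ x y + (α ^ 2 * β) • mixedNij μ₁ μ₂ P₁ P₂ x y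
        + (α * β ^ 2) • mixedNij μ₂ μ₁ P₂ P₁ x y + β ^ 3 • nijDefect μ₂ P₂ x y := by
  simp only [nijDefect, mixedNij, LinearMap.add_apply, LinearMap.smul_apply, map_add, map_smul]
  module

end Defects

theorem linearly_compatible_nijenhuis_iff {k V : Type*} [Field k] [CharZero k]
    [AddCommGroup V] [Module k V]
    (μ₁ μ₂ : V →ₗ[k] V →ₗ[k] V) (P₁ P₂ : V →ₗ[k] V)
    (h₁ : IsNijenhuis μ₁ P₁) (h₂ : IsNijenhuis μ₂ P₂) :
    (∀ α β : k, IsNijenhuis (α • μ₁ + β • μ₂) (α • P₁ + β • P₂)) ↔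
      ((∀ x y z : V,
          μ₂ (μ₁ x y) z + μ₁ (μ₂ x y) z = μ₁ x (μ₂ y z) + μ₂ x (μ₁ y z)) ∧
        (∀ x y : V,
          μ₂ (P₁ x) (P₁ y) + μ₁ (P₁ x) (P₂ y) + μ₁ (P₂ x) (P₁ y)
            = P₁ (μ₂ (P₁ x) y) + P₁ (μ₁ (P₂ x) y) + P₂ (μ₁ (P₁ x) y)
              + P₁ (μ₂ x (P₁ y)) + P₁ (μ₁ x (P₂ y)) + P₂ (μ₁ x (P₁ y))
              - P₁ (P₁ (μ₂ x y)) - P₁ (P₂ (μ₁ x y)) - P₂ (P₁ (μ₁ x y))) ∧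
        (∀ x y : V,
          μ₁ (P₂ x) (P₂ y) + μ₂ (P₂ x) (P₁ y) + μ₂ (P₁ x) (P₂ y)
            = P₂ (μ₁ (P₂ x) y) + P₂ (μ₂ (P₁ x) y) + P₁ (μ₂ (P₂ x) y)
              + P₂ (μ₁ x (P₂ y)) + P₂ (μ₂ x (P₁ y)) + P₁ (μ₂ x (P₂ y))
              - P₂ (P₂ (μ₁ x y)) - P₂ (P₁ (μ₂ x y)) - P₁ (P₂ (μ₂ x y)))) := by
  rw [isNijenhuis_iff_defects] at h₁ h₂
  obtain ⟨a₁, n₁⟩ := h₁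
  obtain ⟨a₂, n₂⟩ := h₂
  simp only [isNijenhuis_iff_defects, assocDefect_comb, nijDefect_comb, a₁, a₂, n₁, n₂,
    smul_zero, zero_add, add_zero]
  constructor
  · intro h
    have mixed (x y : V) :
        mixedNij μ₁ μ₂ P₁ P₂ x y = 0 ∧ mixedNij μ₂ μ₁ P₂ P₁ x y = 0 := by
      have hp := (h 1 1).2 x y
      have hm := (h 1 (-1)).2 x y
      constructor
      · linear_combination (norm := module) (1 / 2 : k) • hp - (1 / 2 : k) • hm
      · linear_combination (norm := module) (1 / 2 : k) • hp + (1 / 2 : k) • hm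
    refine ⟨fun x y z => ?_, fun x y => sub_eq_zero.mp (mixed x y).1, fun x y => ?_⟩
    · have h11 := (h 1 1).1 x y z
      rw [mul_one, one_smul] at h11
      exact sub_eq_zero.mp h11
    · -- The third identity lists the summands of `mixedNij μ₂ μ₁ P₂ P₁` up to order.
      have h21 := (mixed x y).2
      rw [mixedNij, sub_eq_zero] at h21
      linear_combination (norm := abel) h21
  · rintro ⟨ha, h12, h21⟩ α β
    have m12 (x y : V) : mixedNij μ₁ μ₂ P₁ P₂ x y = 0 := sub_eq_zero.mpr (h12 x y)
    have m21 (x y : V) : mixedNij μ₂ μ₁ P₂ P₁ x y = 0 := by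
      rw [mixedNij, sub_eq_zero]
      linear_combination (norm := abel) h21 x y
    have ma (x y z : V) : mixedAssoc μ₁ μ₂ x y z = 0 := sub_eq_zero.mpr (ha x y z)
    simp only [m12, m21, ma, smul_zero, add_zero, implies_true, and_self]
end

section
/- Let k be a field of characteristic zero and V a k-vector space. Let (·₁, α₁) and (·₂, α₂) be two Hom-associative algebra structures on V. Then for all scalars s, t ∈ k the pair (s·₁ + t·₂, sα₁ + tα₂) is a Hom-associative algebra if and only if the following hold for all x, y, z ∈ V: (i) (x·₁y)·₁α₂(z) + (x·₁y)·₂α₁(z) + (x·₂y)·₁α₁(z) = α₂(x)·₁(y·₁z) + α₁(x)·₁(y·₂z) + α₁(x)·₂(y·₁z); (ii) the identity obtained from (i) by interchanging the subscripts 1 and 2 everywhere. -/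
/-!
The Hom-associator of the pencil `(s μ₁ + t μ₂, s α₁ + t α₂)` is a homogeneous cubic in `(s, t)`.
Its `s³` and `t³` coefficients are the Hom-associators of the two given structures, hence vanish,
so it equals `s²t A + st² B`, where `A = 0` and `B = 0` are the two compatibility identities
(`homAssociator_pencil`). Evaluating at `(1, 1)` and `(1, -1)` gives `A + B = 0` and `B - A = 0`,
which force `A = B = 0` because `2` is invertible.
-/

/-- A Hom-associative algebra structure on `V`: a bilinear multiplication `μ`
together with a linear map `α` satisfying `(x·y)·α(z) = α(x)·(y·z)`. -/
def IsHomAssociative {k V : Type*} [Field k] [AddCommGroup V] [Module k V]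
    (μ : V →ₗ[k] V →ₗ[k] V) (a : V →ₗ[k] V) : Prop :=
  ∀ x y z : V, μ (μ x y) (a z) = μ (a x) (μ y z)

/-- The Hom-associator of a linear combination of two Hom-associative structures has only the
mixed coefficients `s²t` and `st²`. -/
theorem homAssociator_pencil {k V : Type*} [Field k] [AddCommGroup V] [Module k V]
    {μ₁ μ₂ : V →ₗ[k] V →ₗ[k] V} {α₁ α₂ : V →ₗ[k] V}
    (h₁ : IsHomAssociative μ₁ α₁) (h₂ : IsHomAssociative μ₂ α₂) (s t : k) (x y z : V) :
    (s • μ₁ + t • μ₂) ((s • μ₁ + t • μ₂) x y) ((s • α₁ + t • α₂) z)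
        - (s • μ₁ + t • μ₂) ((s • α₁ + t • α₂) x) ((s • μ₁ + t • μ₂) y z) =
      (s ^ 2 * t) • ((μ₁ (μ₁ x y) (α₂ z) + μ₂ (μ₁ x y) (α₁ z) + μ₁ (μ₂ x y) (α₁ z))
        - (μ₁ (α₂ x) (μ₁ y z) + μ₁ (α₁ x) (μ₂ y z) + μ₂ (α₁ x) (μ₁ y z)))
      + (s * t ^ 2) • ((μ₂ (μ₂ x y) (α₁ z) + μ₁ (μ₂ x y) (α₂ z) + μ₂ (μ₁ x y) (α₂ z))
        - (μ₂ (α₁ x) (μ₂ y z) + μ₂ (α₂ x) (μ₁ y z) + μ₁ (α₂ x) (μ₂ y z))) := by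
  have e₁ := h₁ x y z
  have e₂ := h₂ x y z
  simp only [LinearMap.add_apply, LinearMap.smul_apply, map_add, map_smul, e₁, e₂]
  module

theorem linearly_compatible_hom_assoc_iff {k V : Type*} [Field k] [CharZero k]
    [AddCommGroup V] [Module k V]
    (μ₁ μ₂ : V →ₗ[k] V →ₗ[k] V) (α₁ α₂ : V →ₗ[k] V)
    (h₁ : IsHomAssociative μ₁ α₁) (h₂ : IsHomAssociative μ₂ α₂) :
    (∀ s t : k, IsHomAssociative (s • μ₁ + t • μ₂) (s • α₁ + t • α₂)) ↔
      ((∀ x y z : V,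
          μ₁ (μ₁ x y) (α₂ z) + μ₂ (μ₁ x y) (α₁ z) + μ₁ (μ₂ x y) (α₁ z)
            = μ₁ (α₂ x) (μ₁ y z) + μ₁ (α₁ x) (μ₂ y z) + μ₂ (α₁ x) (μ₁ y z)) ∧
        (∀ x y z : V,
          μ₂ (μ₂ x y) (α₁ z) + μ₁ (μ₂ x y) (α₂ z) + μ₂ (μ₁ x y) (α₂ z)
            = μ₂ (α₁ x) (μ₂ y z) + μ₂ (α₂ x) (μ₁ y z) + μ₁ (α₂ x) (μ₂ y z))) := by
  constructor
  · intro h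
    have p (x y z : V) := (sub_eq_zero.mpr (h 1 1 x y z)).symm.trans
      (homAssociator_pencil h₁ h₂ 1 1 x y z)
    have q (x y z : V) := (sub_eq_zero.mpr (h 1 (-1) x y z)).symm.trans
      (homAssociator_pencil h₁ h₂ 1 (-1) x y z)
    have two : (2 : k) ≠ 0 := two_ne_zero
    refine ⟨fun x y z => ?_, fun x y z => ?_⟩ <;> rw [← sub_eq_zero] <;>
      refine (smul_eq_zero_iff_right two).mp ?_
    -- `2 A = (A + B) - (B - A)` and `2 B = (A + B) + (B - A)`
    · linear_combination (norm := module) q x y z - p x y z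
    · linear_combination (norm := module) -p x y z - q x y z
  · rintro ⟨hA, hB⟩ s t x y z
    rw [← sub_eq_zero, homAssociator_pencil h₁ h₂, sub_eq_zero.mpr (hA x y z),
      sub_eq_zero.mpr (hB x y z), smul_zero, smul_zero, add_zero]
end

section
/- Let k be a field, V a k-vector space, Ω a nonempty set, and for each ω ∈ Ω let ·_ω : V × V → V be bilinear and α_ω : V → V be k-linear. Assume that for all a, b, c ∈ Ω and all x, y, z ∈ V, (x ·_a y) ·_b α_c(z) = α_c(x) ·_a (y ·_b z). Then for every finitely supported function t : Ω → k, the pair (Σ_ω t_ω ·_ω, Σ_ω t_ω α_ω) is a Hom-associative algebra on V. -/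
theorem matching_hom_assoc_implies_linear_compatible {k V : Type*} [Field k]
    [AddCommGroup V] [Module k V] {Ω : Type*} [Nonempty Ω]
    (μ : Ω → (V →ₗ[k] V →ₗ[k] V)) (α : Ω → (V →ₗ[k] V))
    (hmatch : ∀ a b c : Ω, ∀ x y z : V,
      μ b (μ a x y) (α c z) = μ a (α c x) (μ b y z)) :
    ∀ t : Ω →₀ k,
      IsHomAssociative (t.sum fun ω tω => tω • μ ω)
        (t.sum fun ω tω => tω • α ω) := by
  intro t x y z
  simp only [Finsupp.sum, LinearMap.sum_apply, LinearMap.smul_apply, map_sum, map_smul,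
    Finset.smul_sum]
  -- With `a`, `b`, `c` the indices in `hmatch`, the left side is now summed in the order
  -- `c, a, b` and the right side in the order `b, c, a`; bring the latter to `c, a, b`.
  rw [Finset.sum_comm (f := fun b c => ∑ a ∈ t.support,
    t b • t c • t a • μ a (α c x) (μ b y z))]
  refine Finset.sum_congr rfl fun c _ => ?_
  rw [Finset.sum_comm (f := fun b a => t b • t c • t a • μ a (α c x) (μ b y z))]
  refine Finset.sum_congr rfl fun a _ => Finset.sum_congr rfl fun b _ => ?_
  rw [hmatch a b c]
  module
end

section
/- Let k be a field, V a k-vector space, Ω a nonempty set, and for each ω ∈ Ω let ·_ω : V × V → V be bilinear and P_ω : V → V be k-linear. Assume: (i) the family {·_ω} satisfies matching associativity, i.e., (x·_ay)·_bz = x·_a(y·_bz) for all a, b ∈ Ω; (ii) for all a, b, c ∈ Ω and all x, y ∈ V, P_a(x) ·_c P_b(y) = P_b(P_a(x) ·_c y) + P_a(x ·_c P_b(y)) − P_a(P_b(x ·_c y)). Then for every finitely supported function t : Ω → k, the pair (Σ_ω t_ω ·_ω, Σ_ω t_ω P_ω) is a Nijenhuis algebra on V. -/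
open Submodule in
lemma matching_assoc_span {k V Ω : Type*} [Field k] [AddCommGroup V] [Module k V]
    (μ : Ω → (V →ₗ[k] V →ₗ[k] V))
    (hmatch : ∀ a b : Ω, ∀ x y z : V, μ b (μ a x y) z = μ a x (μ b y z))
    {A B : V →ₗ[k] V →ₗ[k] V} (hA : A ∈ span k (Set.range μ)) (hB : B ∈ span k (Set.range μ))
    (x y z : V) : B (A x y) z = A x (B y z) := by
  induction hA using span_induction with
  | zero => simp
  | add A A' _ _ h h' => simp [h, h']
  | smul r A _ h => simp [h]
  | mem A hA =>
    obtain ⟨a, rfl⟩ := hA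
    induction hB using span_induction with
    | zero => simp
    | add B B' _ _ h h' => simp [h, h']
    | smul r B _ h => simp [h]
    | mem B hB =>
      obtain ⟨b, rfl⟩ := hB
      exact hmatch a b x y z

open Submodule in
lemma matching_nijenhuis_span {k V Ω : Type*} [Field k] [AddCommGroup V] [Module k V]
    (μ : Ω → (V →ₗ[k] V →ₗ[k] V)) (P : Ω → (V →ₗ[k] V))
    (hnij : ∀ a b c : Ω, ∀ x y : V,
      μ c (P a x) (P b y)
        = P b (μ c (P a x) y) + P a (μ c x (P b y)) - P a (P b (μ c x y)))
    {A B : V →ₗ[k] V} {C : V →ₗ[k] V →ₗ[k] V} (hA : A ∈ span k (Set.range P))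
    (hB : B ∈ span k (Set.range P)) (hC : C ∈ span k (Set.range μ)) (x y : V) :
    C (A x) (B y) = B (C (A x) y) + A (C x (B y)) - A (B (C x y)) := by
  induction hA using span_induction with
  | zero => simp
  | add A A' _ _ h h' => simp only [LinearMap.add_apply, map_add, h, h']; abel
  | smul r A _ h => simp only [LinearMap.smul_apply, map_smul, h, smul_add, smul_sub]
  | mem A hA =>
    obtain ⟨a, rfl⟩ := hA
    induction hB using span_induction with
    | zero => simp
    | add B B' _ _ h h' => simp only [LinearMap.add_apply, map_add, h, h']; abel
    | smul r B _ h => simp only [LinearMap.smul_apply, map_smul, h, smul_add, smul_sub]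
    | mem B hB =>
      obtain ⟨b, rfl⟩ := hB
      induction hC using span_induction with
      | zero => simp
      | add C C' _ _ h h' => simp only [LinearMap.add_apply, map_add, h, h']; abel
      | smul r C _ h => simp only [LinearMap.smul_apply, map_smul, h, smul_add, smul_sub]
      | mem C hC =>
        obtain ⟨c, rfl⟩ := hC
        exact hnij a b c x y

theorem matching_nijenhuis_implies_linear_compatible {k V : Type*} [Field k]
    [AddCommGroup V] [Module k V] {Ω : Type*} [Nonempty Ω]
    (μ : Ω → (V →ₗ[k] V →ₗ[k] V)) (P : Ω → (V →ₗ[k] V))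
    (hmatch : ∀ a b : Ω, ∀ x y z : V, μ b (μ a x y) z = μ a x (μ b y z))
    (hnij : ∀ a b c : Ω, ∀ x y : V,
      μ c (P a x) (P b y)
        = P b (μ c (P a x) y) + P a (μ c x (P b y)) - P a (P b (μ c x y))) :
    ∀ t : Ω →₀ k,
      IsNijenhuis (t.sum fun ω tω => tω • μ ω) (t.sum fun ω tω => tω • P ω) := by
  intro t
  have hμ : (t.sum fun ω tω => tω • μ ω) ∈ Submodule.span k (Set.range μ) :=
    Submodule.sum_mem _ fun ω _ => Submodule.smul_mem _ _ (Submodule.subset_span ⟨ω, rfl⟩)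
  have hP : (t.sum fun ω tω => tω • P ω) ∈ Submodule.span k (Set.range P) :=
    Submodule.sum_mem _ fun ω _ => Submodule.smul_mem _ _ (Submodule.subset_span ⟨ω, rfl⟩)
  exact ⟨matching_assoc_span μ hmatch hμ hμ, matching_nijenhuis_span μ P hnij hP hP hμ⟩
end
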